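/- Let v₁, v₂, v₃ ∈ ℝ² be affinely independent with barycentric coordinates λᵢ (λᵢ(vⱼ) = δᵢⱼ), let γⱼ(t) = ((1+t)/2) v_{j+1} + ((1-t)/2) v_{j+2} (indices modulo 3), and fix μ ≥ 1, σ > 0. Then for all i, j ∈ {1,2,3}: ∫_{-1}^{1} q_{σ,μ}(t) λᵢ(γⱼ(t))² g̃_{σ,μ}(t) dt = (‖q_{σ,μ}‖²_{2,σ,μ}/4)(1 - δᵢⱼ), where ‖q_{σ,μ}‖²_{2,σ,μ} = ∫_{-1}^{1} q_{σ,μ}(t)² g̃_{σ,μ}(t) dt. -/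

import Mathlib

open MeasureTheory

/-- Lower incomplete gamma function `γ(s,z) = ∫₀^z u^(s-1) e^(-u) du`. -/
noncomputable def lowGamma (s z : ℝ) : ℝ := ∫ u in (0:ℝ)..z, u ^ (s - 1) * Real.exp (-u)

/-- Modified lower incomplete gamma function `γ^mod(s,z) = γ(s,z)/z^s`. -/
noncomputable def gammaMod (s z : ℝ) : ℝ := lowGamma s z / z ^ s

/-- Second family of densities `g̃_{σ,μ}` on `[-1,1]`. -/
noncomputable def gTilde (σ μ t : ℝ) : ℝ :=
  ((2 * μ - 1) / gammaMod (1 / 2) (1 / (2 * σ ^ (4 * μ - 2)))) *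
    (t ^ 2) ^ (μ - 1) * Real.exp (-(1 / 2) * (t ^ 2 / σ ^ 2) ^ (2 * μ - 1))

/-- Second moment `s_{2,σ,μ}` of `g̃_{σ,μ}`. -/
noncomputable def sMom2 (σ μ : ℝ) : ℝ := ∫ t in (-1:ℝ)..1, t ^ 2 * gTilde σ μ t

/-- The orthogonal quadratic polynomial `q_{σ,μ}(t) = t² - s_{2,σ,μ}`. -/
noncomputable def qPoly (σ μ t : ℝ) : ℝ := t ^ 2 - sMom2 σ μ

/-- Parametrization of the edge `s_j` of the triangle, opposite to the vertex `v j`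
(indices taken cyclically in `Fin 3`). -/
noncomputable def edgeParam (v : Fin 3 → ℝ × ℝ) (j : Fin 3) (t : ℝ) : ℝ × ℝ :=
  ((1 + t) / 2) • v (j + 1) + ((1 - t) / 2) • v (j + 2)

/-- the unnormalised density -/
noncomputable def hAux (σ μ t : ℝ) : ℝ :=
  (t ^ 2) ^ (μ - 1) * Real.exp (-(1 / 2) * (t ^ 2 / σ ^ 2) ^ (2 * μ - 1))

lemma hAux_cont (σ μ : ℝ) (hμ : 1 ≤ μ) : Continuous (hAux σ μ) := by
  unfold hAux
  refine Continuous.mul ?_ (Real.continuous_exp.comp (continuous_const.mul ?_))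
  · exact (continuous_pow 2).rpow_const (fun x => Or.inr (by linarith))
  · exact ((continuous_pow 2).div_const _).rpow_const (fun x => Or.inr (by linarith))

lemma gTilde_eq (σ μ t : ℝ) : gTilde σ μ t =
    ((2 * μ - 1) / gammaMod (1 / 2) (1 / (2 * σ ^ (4 * μ - 2)))) * hAux σ μ t := by
  unfold gTilde hAux; ring

lemma gTilde_cont (σ μ : ℝ) (hμ : 1 ≤ μ) : Continuous (gTilde σ μ) := by
  have : gTilde σ μ = fun t => _ := funext (gTilde_eq σ μ)
  rw [this]
  exact continuous_const.mul (hAux_cont σ μ hμ)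

lemma gTilde_neg (σ μ t : ℝ) : gTilde σ μ (-t) = gTilde σ μ t := by
  simp [gTilde]

lemma int_even (f : ℝ → ℝ) (hf : Continuous f) (he : ∀ t, f (-t) = f t) :
    ∫ t in (-1:ℝ)..1, f t = 2 * ∫ t in (0:ℝ)..1, f t := by
  rw [← intervalIntegral.integral_add_adjacent_intervals (b := 0)
    (hf.intervalIntegrable _ _) (hf.intervalIntegrable _ _)]
  have := intervalIntegral.integral_comp_neg (a := 0) (b := 1) f
  simp only [he, neg_zero] at this
  rw [← this]; ring

lemma int_odd (f : ℝ → ℝ) (he : ∀ t, f (-t) = - f t) :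
    ∫ t in (-1:ℝ)..1, f t = 0 := by
  have := intervalIntegral.integral_comp_neg (a := -1) (b := 1) f
  simp only [he, neg_neg, intervalIntegral.integral_neg] at this
  linarith

lemma hAux_pos (σ μ t : ℝ) (ht : 0 < t) : 0 < hAux σ μ t := by
  unfold hAux; positivity

lemma subst_key (σ μ t : ℝ) (hσ : 0 < σ) (ht : 0 < t) :
    ((1 / (2 * σ ^ (4 * μ - 2)) * t ^ (4 * μ - 2)) ^ ((1:ℝ) / 2 - 1)
      * Real.exp (-(1 / (2 * σ ^ (4 * μ - 2)) * t ^ (4 * μ - 2))))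
      * (1 / (2 * σ ^ (4 * μ - 2)) * ((4 * μ - 2) * t ^ (4 * μ - 2 - 1)))
    = (1 / (2 * σ ^ (4 * μ - 2))) ^ ((1:ℝ) / 2) * (2 * (2 * μ - 1)) * hAux σ μ t := by
  have hE : -(1 / (2 * σ ^ (4 * μ - 2)) * t ^ (4 * μ - 2))
      = -(1 / 2) * (t ^ 2 / σ ^ 2) ^ (2 * μ - 1) := by
    rw [Real.div_rpow (by positivity) (by positivity), ← Real.rpow_natCast t 2,
      ← Real.rpow_natCast σ 2, ← Real.rpow_mul ht.le, ← Real.rpow_mul hσ.le]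
    have : ((2:ℕ):ℝ) * (2 * μ - 1) = 4 * μ - 2 := by push_cast; ring
    rw [this]; field_simp
  rw [hE]
  unfold hAux
  have hz : 0 < 1 / (2 * σ ^ (4 * μ - 2)) := by positivity
  generalize 1 / (2 * σ ^ (4 * μ - 2)) = z at hz
  rw [Real.mul_rpow hz.le (by positivity), ← Real.rpow_mul ht.le]
  have h1 : z ^ ((1:ℝ)/2 - 1) * z = z ^ ((1:ℝ)/2) := by
    rw [Real.rpow_sub_one hz.ne']; field_simp
  have h2 : t ^ ((4 * μ - 2) * ((1:ℝ)/2 - 1)) * t ^ (4 * μ - 2 - 1) = (t ^ 2) ^ (μ - 1) := by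
    rw [← Real.rpow_add ht, ← Real.rpow_natCast t 2, ← Real.rpow_mul ht.le]
    congr 1; push_cast; ring
  rw [← h1, ← h2]; ring

lemma lowGamma_eq (σ μ : ℝ) (hσ : 0 < σ) (hμ : 1 ≤ μ) :
    lowGamma (1 / 2) (1 / (2 * σ ^ (4 * μ - 2))) =
      (1 / (2 * σ ^ (4 * μ - 2))) ^ ((1:ℝ) / 2) * (2 * (2 * μ - 1)) *
        ∫ t in (0:ℝ)..1, hAux σ μ t := by
  set z := 1 / (2 * σ ^ (4 * μ - 2)) with hzdef
  have hz : 0 < z := by positivity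
  have hp : 0 < 4 * μ - 2 := by linarith
  have hIm : ∀ s : Set ℝ, s ⊆ Set.Ici 0 → (fun t : ℝ => z * t ^ (4 * μ - 2)) '' s ⊆ Set.Ici 0 := by
    rintro s hs _ ⟨t, ht, rfl⟩
    have := hs ht
    simp only [Set.mem_Ici] at *
    positivity
  have hconv : IntegrableOn (fun u : ℝ => u ^ ((1:ℝ) / 2 - 1) * Real.exp (-u)) (Set.Ici 0) := by
    rw [integrableOn_Ici_iff_integrableOn_Ioi]
    have := Real.GammaIntegral_convergent (s := 1 / 2) (by norm_num)
    exact this.congr_fun (fun x _ => mul_comm _ _) measurableSet_Ioi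
  have key := intervalIntegral.integral_comp_mul_deriv''' (a := 0) (b := 1)
    (f := fun t : ℝ => z * t ^ (4 * μ - 2))
    (f' := fun t : ℝ => z * ((4 * μ - 2) * t ^ (4 * μ - 2 - 1)))
    (g := fun u : ℝ => u ^ ((1:ℝ) / 2 - 1) * Real.exp (-u))
    (by
      exact (continuous_const.mul
        (continuous_id.rpow_const (fun x => Or.inr hp.le))).continuousOn)
    (by
      intro x hx
      simp at hx
      exact ((Real.hasDerivAt_rpow_const (Or.inl hx.1.ne')).const_mul z).hasDerivWithinAt)
    (by
      rintro _ ⟨t, ht, rfl⟩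
      simp at ht
      have h0 : 0 < z * t ^ (4 * μ - 2) := mul_pos hz (Real.rpow_pos_of_pos ht.1 _)
      exact ((Real.continuousAt_rpow_const _ _ (Or.inl h0.ne')).mul
        (by fun_prop)).continuousWithinAt)
    (by
      refine hconv.mono_set (hIm _ ?_)
      intro x hx
      simp at hx
      exact hx.1)
    (by
      rw [Set.uIcc_of_le zero_le_one, integrableOn_Icc_iff_integrableOn_Ioc]
      refine IntegrableOn.congr_fun (f := fun t => z ^ ((1:ℝ) / 2) * (2 * (2 * μ - 1)) * hAux σ μ t)
        ?_ ?_ measurableSet_Ioc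
      · exact ((continuous_const.mul (hAux_cont σ μ hμ)).integrableOn_Ioc)
      · intro t ht
        exact (subst_key σ μ t hσ ht.1).symm)
  simp only [Real.one_rpow, mul_one, Real.zero_rpow hp.ne', mul_zero] at key
  unfold lowGamma
  rw [← key, ← intervalIntegral.integral_const_mul]
  refine intervalIntegral.integral_congr_ae (Filter.Eventually.of_forall ?_)
  intro t ht
  rw [Set.uIoc_of_le zero_le_one] at ht
  exact subst_key σ μ t hσ ht.1

lemma gTilde_int (σ μ : ℝ) (hσ : 0 < σ) (hμ : 1 ≤ μ) :
    ∫ t in (-1:ℝ)..1, gTilde σ μ t = 1 := by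
  rw [int_even _ (gTilde_cont σ μ hμ) (gTilde_neg σ μ)]
  simp only [gTilde_eq, intervalIntegral.integral_const_mul]
  unfold gammaMod
  rw [lowGamma_eq σ μ hσ hμ]
  have hI : 0 < ∫ t in (0:ℝ)..1, hAux σ μ t :=
    intervalIntegral.intervalIntegral_pos_of_pos_on
      ((hAux_cont σ μ hμ).intervalIntegrable _ _) (fun x hx => hAux_pos σ μ x hx.1) one_pos
  have hz : 0 < (1 / (2 * σ ^ (4 * μ - 2))) ^ ((1:ℝ) / 2) := by positivity
  have hp : 0 < 2 * μ - 1 := by linarith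
  generalize (1 / (2 * σ ^ (4 * μ - 2))) ^ ((1:ℝ) / 2) = c at *
  generalize (∫ t in (0:ℝ)..1, hAux σ μ t) = I at *
  generalize 2 * μ - 1 = p at *
  field_simp

lemma core (σ μ : ℝ) (hσ : 0 < σ) (hμ : 1 ≤ μ) (e : ℝ) (he : e ^ 2 = 1) :
    ∫ t in (-1:ℝ)..1, qPoly σ μ t * ((1 + e * t) / 2) ^ 2 * gTilde σ μ t
      = (∫ t in (-1:ℝ)..1, (qPoly σ μ t) ^ 2 * gTilde σ μ t) / 4 := by
  have hg := gTilde_cont σ μ hμ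
  have hq : Continuous (qPoly σ μ) := by unfold qPoly; fun_prop
  have h0 : ∫ t in (-1:ℝ)..1, qPoly σ μ t * gTilde σ μ t = 0 := by
    have : ∀ t, qPoly σ μ t * gTilde σ μ t
        = t ^ 2 * gTilde σ μ t - sMom2 σ μ * gTilde σ μ t := by
      intro t; unfold qPoly; ring
    simp only [this]
    rw [intervalIntegral.integral_sub
      (Continuous.intervalIntegrable (by fun_prop) _ _)
      (Continuous.intervalIntegrable (by fun_prop) _ _),
      intervalIntegral.integral_const_mul, gTilde_int σ μ hσ hμ]
    simp [sMom2]
  have h1 : ∫ t in (-1:ℝ)..1, t * (qPoly σ μ t * gTilde σ μ t) = 0 := by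
    apply int_odd
    intro t
    rw [gTilde_neg]; simp [qPoly]
  have : ∀ t, qPoly σ μ t * ((1 + e * t) / 2) ^ 2 * gTilde σ μ t
      = (1 / 4) * ((qPoly σ μ t) ^ 2 * gTilde σ μ t)
        + (((1 + sMom2 σ μ) / 4) * (qPoly σ μ t * gTilde σ μ t)
        + (e / 2) * (t * (qPoly σ μ t * gTilde σ μ t))) := by
    intro t
    have h : ((1 + e * t) / 2) ^ 2 = (1 + 2 * e * t + t ^ 2) / 4 := by
      linear_combination (t ^ 2 / 4) * he
    rw [h]; unfold qPoly; ring
  simp only [this]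
  rw [intervalIntegral.integral_add
      (Continuous.intervalIntegrable (by fun_prop) _ _)
      (Continuous.intervalIntegrable (by fun_prop) _ _),
    intervalIntegral.integral_add
      (Continuous.intervalIntegrable (by fun_prop) _ _)
      (Continuous.intervalIntegrable (by fun_prop) _ _),
    intervalIntegral.integral_const_mul, intervalIntegral.integral_const_mul,
    intervalIntegral.integral_const_mul, h0, h1]
  ring

/-- `∫_{-1}^{1} q_{σ,μ}(t) λᵢ(γⱼ(t))² g̃_{σ,μ}(t) dt = (‖q_{σ,μ}‖²_{2,σ,μ}/4)(1 - δᵢⱼ)`. -/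
theorem integral_qPoly_bary_sq_edge (v : Fin 3 → ℝ × ℝ) (hv : AffineIndependent ℝ v)
    (lam : Fin 3 → ℝ × ℝ → ℝ)
    (hlam : ∀ i, ∃ A : (ℝ × ℝ) →ᵃ[ℝ] ℝ, ∀ x, lam i x = A x)
    (hkr : ∀ i j, lam i (v j) = if i = j then (1:ℝ) else 0)
    (σ μ : ℝ) (hσ : 0 < σ) (hμ : 1 ≤ μ)
    (i j : Fin 3) :
    ∫ t in (-1:ℝ)..1, qPoly σ μ t * (lam i (edgeParam v j t)) ^ 2 * gTilde σ μ t
      = ((∫ t in (-1:ℝ)..1, (qPoly σ μ t) ^ 2 * gTilde σ μ t) / 4)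
          * (1 - if i = j then (1:ℝ) else 0) := by
  have hl : ∀ t, lam i (edgeParam v j t)
      = (1 + t) / 2 * lam i (v (j + 1)) + (1 - t) / 2 * lam i (v (j + 2)) := by
    intro t
    obtain ⟨A, hA⟩ := hlam i
    rw [hA, hA, hA]
    have h : edgeParam v j t = AffineMap.lineMap (v (j + 2)) (v (j + 1)) ((1 + t) / 2) := by
      rw [AffineMap.lineMap_apply_module]
      unfold edgeParam
      rw [add_comm]
      congr 2
      ring
    rw [h, AffineMap.apply_lineMap, AffineMap.lineMap_apply_module]
    simp only [smul_eq_mul]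
    ring
  simp only [hl, hkr]
  have hp := core σ μ hσ hμ 1 (by norm_num)
  have hm := core σ μ hσ hμ (-1) (by norm_num)
  have hp' : ∀ t : ℝ, 1 + 1 * t = 1 + t := fun t => by ring
  have hm' : ∀ t : ℝ, 1 + -1 * t = 1 - t := fun t => by ring
  simp only [hp'] at hp
  simp only [hm'] at hm
  have hc : ∀ i j : Fin 3, i = j ∨ i = j + 1 ∨ i = j + 2 := by decide
  have n1 : ∀ j : Fin 3, j ≠ j + 1 := by decide
  have n2 : ∀ j : Fin 3, j ≠ j + 2 := by decide
  have n3 : ∀ j : Fin 3, j + 1 ≠ j + 2 := by decide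
  rcases hc i j with h | h | h
  · subst h
    simp [n1, n2]
  · subst h
    simp only [if_true, if_neg (n3 j), if_neg (n1 j).symm, mul_one, mul_zero, add_zero, sub_zero]
    exact hp
  · subst h
    simp only [if_true, if_neg (n3 j).symm, if_neg (n2 j).symm, mul_one, mul_zero, zero_add,
      sub_zero]
    exact hm
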